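/- Let $G$ be a connected weighted graph and let $A, B \subseteq V(G)$ be disjoint nonempty sets. Let $I := \mathtt{Schur}(G, A \cup B)$ and let $P$ be the diagonal matrix indexed by $A \cup B$ with $P(u,u) = c_u^G$ (the degree of $u$ in $G$). Then the smallest nonzero eigenvalue $\lambda$ of $P^{-1/2} L_I P^{-1/2}$ satisfies $\lambda \ge \lambda_G$, where $\lambda_G$ is the smallest nonzero eigenvalue of the normalized Laplacian $N_G = D_G^{-1/2} L_G D_G^{-1/2}$. -/

import Mathlib

open Matrix MeasureTheory
open scoped Classical

/-- The (weighted) Laplacian matrix of the weighted graph on `V` with weights `c`. -/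
noncomputable def lapl {V : Type*} [Fintype V] [DecidableEq V] (c : V → V → ℝ) :
    Matrix V V ℝ :=
  fun u v => if u = v then ∑ w, c u w else -c u v

/-- The graph described by `L` is connected: the kernel of `L` consists of constants. -/
def LapConnected {V : Type*} [Fintype V] (L : Matrix V V ℝ) : Prop :=
  ∀ x : V → ℝ, L *ᵥ x = 0 → ∃ k : ℝ, ∀ v, x v = k

/-- The Schur complement of `L` onto the rows and columns indexed by `S`,
eliminating the vertices outside of `S`. -/
noncomputable def schur {V : Type*} [Fintype V] [DecidableEq V]
    (L : Matrix V V ℝ) (S : Set V) : Matrix S S ℝ :=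
  (Matrix.of fun i j : S => L i.1 j.1)
    - (Matrix.of fun (i : S) (j : {v : V // v ∉ S}) => L i.1 j.1)
        * (Matrix.of fun i j : {v : V // v ∉ S} => L i.1 j.1)⁻¹
        * (Matrix.of fun (i : {v : V // v ∉ S}) (j : S) => L i.1 j.1)

/-- `B` is the Moore–Penrose pseudoinverse of `A`. -/
def IsMPInv {n : Type*} [Fintype n] (A B : Matrix n n ℝ) : Prop :=
  A * B * A = A ∧ B * A * B = B ∧ (A * B)ᵀ = A * B ∧ (B * A)ᵀ = B * A

/-- The weighted degree of `v`. -/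
noncomputable def wdeg {V : Type*} [Fintype V] (c : V → V → ℝ) (v : V) : ℝ := ∑ u, c v u

/-- The smallest Rayleigh quotient of `M` over nonzero vectors orthogonal to `w`;
for a PSD matrix whose kernel is spanned by `w`, this is the smallest nonzero
eigenvalue of `M`. -/
noncomputable def rayleighMin {n : Type*} [Fintype n] (M : Matrix n n ℝ) (w : n → ℝ) : ℝ :=
  sInf {r : ℝ | ∃ x : n → ℝ, x ≠ 0 ∧ x ⬝ᵥ w = 0 ∧ r = (x ⬝ᵥ (M *ᵥ x)) / (x ⬝ᵥ x)}

/-- The normalized Laplacian `D^{-1/2} L D^{-1/2}`. -/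
noncomputable def normLapl {V : Type*} [Fintype V] [DecidableEq V] (c : V → V → ℝ) :
    Matrix V V ℝ :=
  fun u v => lapl c u v / (Real.sqrt (wdeg c u) * Real.sqrt (wdeg c v))

/-- `λ_G`, the smallest nonzero eigenvalue of the normalized Laplacian,
via its Rayleigh quotient characterization over vectors orthogonal to `D^{1/2} 1`. -/
noncomputable def lambdaG {V : Type*} [Fintype V] [DecidableEq V] (c : V → V → ℝ) : ℝ :=
  rayleighMin (normLapl c) (fun v => Real.sqrt (wdeg c v))

/-!
Put `M = D^{-1/2} L D^{-1/2}` and `w = D^{1/2} 1`, so that `M w = 0`. The Schur complement commutes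
with diagonal rescaling, hence `P^{-1/2} L_I P^{-1/2}` is the Schur complement of `M` onto `A ∪ B`.
Given `x` on `A ∪ B` orthogonal to `w`, its harmonic extension `z` has energy
`z ⬝ M z = x ⬝ (schur M) x`. Projecting `z` orthogonally to `w` does not change its energy, because
`M w = 0`; and it leaves a vector at least as long as `x`, because on `A ∪ B` it subtracts a vector
orthogonal to `x`. So the Rayleigh quotient of `x` is bounded below by one admissible for `λ_G`.
-/

section RayleighMin

variable {n : Type*} [Fintype n] {M : Matrix n n ℝ} {w : n → ℝ}

lemma rayleighMin_le (hM : M.PosSemidef) {x : n → ℝ} (hx : x ≠ 0) (hxw : x ⬝ᵥ w = 0) :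
    rayleighMin M w ≤ (x ⬝ᵥ M *ᵥ x) / (x ⬝ᵥ x) := by
  refine csInf_le ⟨0, ?_⟩ ⟨x, hx, hxw, rfl⟩
  rintro _ ⟨y, -, -, rfl⟩
  exact div_nonneg (hM.dotProduct_mulVec_nonneg y) (dotProduct_self_star_nonneg y)

lemma le_rayleighMin [Nontrivial n] {a : ℝ}
    (h : ∀ x : n → ℝ, x ≠ 0 → x ⬝ᵥ w = 0 → a ≤ (x ⬝ᵥ M *ᵥ x) / (x ⬝ᵥ x)) :
    a ≤ rayleighMin M w := by
  obtain ⟨x, hx, hxw⟩ := exists_ne_zero_dotProduct_eq_zero w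
  refine le_csInf ⟨_, x, hx, hxw, rfl⟩ ?_
  rintro _ ⟨y, hy, hyw, rfl⟩
  exact h y hy hyw

end RayleighMin

section Projection

variable {m n R : Type*} [Fintype m] [Fintype n]

lemma exists_sub_smul_dotProduct_eq_zero [Field R] [LinearOrder R] [IsStrictOrderedRing R]
    (z w : n → R) : ∃ k : R, (z - k • w) ⬝ᵥ w = 0 := by
  refine ⟨(z ⬝ᵥ w) / (w ⬝ᵥ w), ?_⟩
  have hw : w ⬝ᵥ w = 0 → z ⬝ᵥ w = 0 := fun h => by
    rw [dotProduct_self_eq_zero.1 h, dotProduct_zero]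
  rw [sub_dotProduct, smul_dotProduct, smul_eq_mul, div_mul_cancel_of_imp hw, sub_self]

variable [CommRing R]

lemma dotProduct_mulVec_sub_smul_self {M : Matrix n n R} (hM : M.IsSymm) {w : n → R}
    (hMw : M *ᵥ w = 0) (z : n → R) (k : R) :
    (z - k • w) ⬝ᵥ M *ᵥ (z - k • w) = z ⬝ᵥ M *ᵥ z := by
  have hwM : w ᵥ* M = 0 := by rw [← mulVec_transpose, hM.eq, hMw]
  rw [mulVec_sub, mulVec_smul, hMw, smul_zero, sub_zero, sub_dotProduct, smul_dotProduct,
    dotProduct_mulVec w, hwM, zero_dotProduct, smul_zero, sub_zero]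

variable [LinearOrder R] [IsStrictOrderedRing R]

lemma dotProduct_self_le_dotProduct_sub_smul_self {x w : n → R} (hxw : x ⬝ᵥ w = 0) (k : R) :
    x ⬝ᵥ x ≤ (x - k • w) ⬝ᵥ (x - k • w) := by
  have pythagoras : (x - k • w) ⬝ᵥ (x - k • w) = x ⬝ᵥ x + (k • w) ⬝ᵥ (k • w) := by
    simp only [sub_dotProduct, dotProduct_sub, smul_dotProduct, dotProduct_smul,
      dotProduct_comm w x, hxw, smul_zero, sub_zero, zero_sub, smul_neg,
      sub_neg_eq_add]
  rw [pythagoras]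
  exact le_add_of_nonneg_right (Finset.sum_nonneg fun i _ => mul_self_nonneg _)

lemma dotProduct_comp_self_le {f : m → n} (hf : Function.Injective f) (z : n → R) :
    (z ∘ f) ⬝ᵥ (z ∘ f) ≤ z ⬝ᵥ z := by
  calc (z ∘ f) ⬝ᵥ (z ∘ f) = ∑ i ∈ Finset.univ.map ⟨f, hf⟩, z i * z i := by
        rw [Finset.sum_map]; rfl
    _ ≤ z ⬝ᵥ z := Finset.sum_le_univ_sum_of_nonneg fun i => mul_self_nonneg (z i)

end Projection

section SchurComplement

variable {V R : Type*} {S : Set V}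

/-- The vector on `V` with restrictions `x` to `S` and `t` to the complement of `S`. -/
noncomputable def glue (x : S → R) (t : {v // v ∉ S} → R) : V → R :=
  Sum.elim x t ∘ (Equiv.sumCompl (· ∈ S)).symm

lemma glue_coe (x : S → R) (t : {v // v ∉ S} → R) (i : S) : glue x t i = x i :=
  congrArg (Sum.elim x t) (Equiv.sumCompl_symm_apply_pos i)

lemma glue_coe_compl (x : S → R) (t : {v // v ∉ S} → R) (i : {v // v ∉ S}) : glue x t i = t i :=
  congrArg (Sum.elim x t) (Equiv.sumCompl_symm_apply_neg i)

variable [Fintype V]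

lemma dotProduct_mulVec_glue [Fintype S] [NonUnitalNonAssocSemiring R] (M : Matrix V V R)
    (x : S → R) (t : {v // v ∉ S} → R) :
    glue x t ⬝ᵥ M *ᵥ glue x t =
      Sum.elim x t ⬝ᵥ fromBlocks (M.toBlock (· ∈ S) (· ∈ S)) (M.toBlock (· ∈ S) (· ∉ S))
        (M.toBlock (· ∉ S) (· ∈ S)) (M.toBlock (· ∉ S) (· ∉ S)) *ᵥ Sum.elim x t := by
  have blocks : M.submatrix (Equiv.sumCompl (· ∈ S)) (Equiv.sumCompl (· ∈ S)) =
      fromBlocks (M.toBlock (· ∈ S) (· ∈ S)) (M.toBlock (· ∈ S) (· ∉ S))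
        (M.toBlock (· ∉ S) (· ∈ S)) (M.toBlock (· ∉ S) (· ∉ S)) := by
    ext (i | i) (j | j) <;> rfl
  rw [← blocks, submatrix_mulVec_equiv, glue, comp_equiv_symm_dotProduct]

variable [DecidableEq V] {M : Matrix V V ℝ}

lemma isUnit_toBlock_compl_of_posSemidef (hM : M.PosSemidef)
    (hker : ∀ z : V → ℝ, M *ᵥ z = 0 → (∀ v ∈ S, z v = 0) → z = 0) :
    IsUnit (M.toBlock (· ∉ S) (· ∉ S)) := by
  refine mulVec_injective_iff_isUnit.1 <|
    (injective_iff_map_eq_zero (M.toBlock (· ∉ S) (· ∉ S)).mulVecLin).2 fun t ht => ?_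
  have energy : glue (0 : S → ℝ) t ⬝ᵥ M *ᵥ glue 0 t = 0 := by
    rw [dotProduct_mulVec_glue, fromBlocks_mulVec]
    simpa [dotProduct] using congrArg (t ⬝ᵥ ·) ht
  have hz : glue (0 : S → ℝ) t = 0 :=
    hker _ ((hM.dotProduct_mulVec_zero_iff _).1 energy) fun v hv => glue_coe 0 t ⟨v, hv⟩
  funext i
  rw [← glue_coe_compl 0 t i, hz, Pi.zero_apply, Pi.zero_apply]

lemma schur_eq_toBlock (M : Matrix V V ℝ) (S : Set V) :
    schur M S = M.toBlock (· ∈ S) (· ∈ S) -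
      M.toBlock (· ∈ S) (· ∉ S) * (M.toBlock (· ∉ S) (· ∉ S))⁻¹ * M.toBlock (· ∉ S) (· ∈ S) :=
  rfl

variable [Fintype S]

/-- The harmonic extension of `x` from `S` to `V`: if the block of `M` off `S` is invertible, it
is the only extension that `M` maps to a vector vanishing off `S`. -/
noncomputable def harmonicExtension (M : Matrix V V ℝ) (x : S → ℝ) : V → ℝ :=
  glue x (-(((M.toBlock (· ∉ S) (· ∉ S))⁻¹ * M.toBlock (· ∉ S) (· ∈ S)) *ᵥ x))

lemma harmonicExtension_coe (M : Matrix V V ℝ) (x : S → ℝ) (i : S) :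
    harmonicExtension M x i = x i :=
  glue_coe x _ i

lemma dotProduct_mulVec_harmonicExtension (hM : M.IsHermitian)
    (hoff : IsUnit (M.toBlock (· ∉ S) (· ∉ S))) (x : S → ℝ) :
    harmonicExtension M x ⬝ᵥ M *ᵥ harmonicExtension M x = x ⬝ᵥ schur M S *ᵥ x := by
  have := hoff.invertible
  have hblock : M.toBlock (· ∉ S) (· ∈ S) = (M.toBlock (· ∈ S) (· ∉ S))ᴴ :=
    congrArg (fun N : Matrix V V ℝ => N.toBlock (· ∉ S) (· ∈ S)) hM.symm
  have hoffHerm : (M.toBlock (· ∉ S) (· ∉ S)).IsHermitian := hM.submatrix _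
  have complete_square := schur_complement_eq₂₂ (M.toBlock (· ∈ S) (· ∈ S))
    (M.toBlock (· ∈ S) (· ∉ S)) x
    (-(((M.toBlock (· ∉ S) (· ∉ S))⁻¹ * M.toBlock (· ∉ S) (· ∈ S)) *ᵥ x)) hoffHerm
  rw [← hblock, add_neg_cancel, dotProduct_zero, zero_add, ← schur_eq_toBlock] at complete_square
  rw [harmonicExtension, dotProduct_mulVec_glue, dotProduct_mulVec, dotProduct_mulVec]
  simpa only [star_trivial] using complete_square

theorem rayleighMin_le_rayleighMin_schur (hM : M.PosSemidef) {w : V → ℝ}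
    (hMw : M *ᵥ w = 0) (hoff : IsUnit (M.toBlock (· ∉ S) (· ∉ S))) (hS : S.Nontrivial) :
    rayleighMin M w ≤ rayleighMin (schur M S) (fun i : S => w i) := by
  have := hS.coe_sort
  refine le_rayleighMin fun x hx hxw => ?_
  set z := harmonicExtension M x
  obtain ⟨k, hk⟩ := exists_sub_smul_dotProduct_eq_zero z w
  have norm_le : x ⬝ᵥ x ≤ (z - k • w) ⬝ᵥ (z - k • w) := by
    have restrict : (z - k • w) ∘ ((↑) : S → V) = x - k • fun i : S => w i :=
      funext fun i => congrArg (· - k * w i) (harmonicExtension_coe M x i)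
    exact (dotProduct_self_le_dotProduct_sub_smul_self hxw k).trans
      (restrict ▸ dotProduct_comp_self_le Subtype.val_injective (z - k • w))
  have hxx : 0 < x ⬝ᵥ x := dotProduct_self_star_pos_iff.2 hx
  have hz : z - k • w ≠ 0 := dotProduct_self_star_pos_iff.1 (hxx.trans_le norm_le)
  calc rayleighMin M w
      ≤ ((z - k • w) ⬝ᵥ M *ᵥ (z - k • w)) / ((z - k • w) ⬝ᵥ (z - k • w)) :=
        rayleighMin_le hM hz hk
    _ = (z ⬝ᵥ M *ᵥ z) / ((z - k • w) ⬝ᵥ (z - k • w)) := by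
        rw [dotProduct_mulVec_sub_smul_self (isHermitian_iff_isSymm.1 hM.isHermitian) hMw]
    _ ≤ (z ⬝ᵥ M *ᵥ z) / (x ⬝ᵥ x) :=
        div_le_div_of_nonneg_left (hM.dotProduct_mulVec_nonneg z) hxx norm_le
    _ = (x ⬝ᵥ schur M S *ᵥ x) / (x ⬝ᵥ x) := by
        rw [dotProduct_mulVec_harmonicExtension hM.isHermitian hoff]

end SchurComplement

section DiagonalScaling

variable {m n K : Type*} [Fintype m] [Fintype n] [DecidableEq m] [DecidableEq n]

lemma fun_div_mul_eq_diagonal_mul_mul_diagonal [Field K] (L : Matrix n n K) (s : n → K) :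
    (fun i j => L i j / (s i * s j) : Matrix n n K) = diagonal s⁻¹ * L * diagonal s⁻¹ := by
  ext i j
  rw [mul_diagonal, diagonal_mul, Pi.inv_apply, Pi.inv_apply]
  field_simp

lemma toBlock_diagonal_mul_mul_diagonal [Semiring K] (d : m → K) (L : Matrix m n K) (e : n → K)
    (p : m → Prop) (q : n → Prop) [Fintype {i // p i}] [Fintype {j // q j}] :
    (diagonal d * L * diagonal e).toBlock p q =
      diagonal (fun i : {i // p i} => d i) * L.toBlock p q *
        diagonal (fun j : {j // q j} => e j) := by
  ext i j
  simp only [toBlock_apply, mul_diagonal, diagonal_mul]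

lemma schur_diagonal_mul_mul_diagonal {S : Set n} [Fintype S] {d e : n → ℝ}
    (hd : ∀ v ∉ S, d v ≠ 0) (he : ∀ v ∉ S, e v ≠ 0) (L : Matrix n n ℝ) :
    schur (diagonal d * L * diagonal e) S =
      diagonal (fun i : S => d i) * schur L S * diagonal (fun i : S => e i) := by
  have hdT : IsUnit (diagonal fun i : {v // v ∉ S} => d i).det := by
    simpa [Finset.prod_ne_zero_iff] using hd
  have heT : IsUnit (diagonal fun i : {v // v ∉ S} => e i).det := by
    simpa [Finset.prod_ne_zero_iff] using he
  simp only [schur_eq_toBlock, toBlock_diagonal_mul_mul_diagonal, Matrix.mul_inv_rev,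
    Matrix.mul_sub, Matrix.sub_mul]
  simp only [Matrix.mul_assoc, mul_nonsing_inv_cancel_left _ _ heT,
    nonsing_inv_mul_cancel_left _ _ hdT]

end DiagonalScaling

section Connected

variable {V : Type*} [Fintype V] {L : Matrix V V ℝ}

lemma LapConnected.diag_pos [Nontrivial V] (hL : L.PosSemidef) (hconn : LapConnected L) (v : V) :
    0 < L v v := by
  refine hL.diag_nonneg.lt_of_ne' fun hv => ?_
  have energy : star (Pi.single v (1 : ℝ)) ⬝ᵥ L *ᵥ Pi.single v 1 = 0 := by
    simpa using hv
  obtain ⟨k, hk⟩ := hconn _ ((hL.dotProduct_mulVec_zero_iff _).1 energy)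
  obtain ⟨u, hu⟩ := exists_ne v
  have : (Pi.single v 1 : V → ℝ) v = (Pi.single v 1 : V → ℝ) u := (hk v).trans (hk u).symm
  simp [hu] at this

variable [DecidableEq V]

lemma LapConnected.isUnit_toBlock_compl (hL : L.PosSemidef) (hconn : LapConnected L) {S : Set V}
    (hS : S.Nonempty) : IsUnit (L.toBlock (· ∉ S) (· ∉ S)) := by
  refine isUnit_toBlock_compl_of_posSemidef hL fun z hz hzS => ?_
  obtain ⟨k, hk⟩ := hconn z hz
  obtain ⟨v, hv⟩ := hS
  have hk0 : k = 0 := (hk v).symm.trans (hzS v hv)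
  exact funext fun u => (hk u).trans hk0

theorem schur_normalized_eigenvalue_ge_general (hL : L.PosSemidef) (hL1 : L *ᵥ 1 = 0)
    (hconn : LapConnected L) {d : V → ℝ} (hd : ∀ v, 0 < d v) {S : Set V} [Fintype S]
    (hS : S.Nontrivial) :
    rayleighMin (fun u v => L u v / (√(d u) * √(d v))) (fun v => √(d v)) ≤
      rayleighMin (fun i j : S => schur L S i j / (√(d i) * √(d j))) (fun i : S => √(d i)) := by
  let s : V → ℝ := fun v => √(d v)
  have hs (v : V) : s v ≠ 0 := (Real.sqrt_pos.2 (hd v)).ne'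
  have hs_inv (v : V) : s⁻¹ v ≠ 0 := inv_ne_zero (hs v)
  have psd : (diagonal s⁻¹ * L * diagonal s⁻¹).PosSemidef := by
    simpa using hL.mul_mul_conjTranspose_same (diagonal s⁻¹)
  have kernel : (diagonal s⁻¹ * L * diagonal s⁻¹) *ᵥ s = 0 := by
    have hs_one : diagonal s⁻¹ *ᵥ s = 1 := by
      funext v
      rw [mulVec_diagonal, Pi.inv_apply, inv_mul_cancel₀ (hs v), Pi.one_apply]
    rw [← mulVec_mulVec, hs_one, ← mulVec_mulVec, hL1, mulVec_zero]
  have hoff : IsUnit ((diagonal s⁻¹ * L * diagonal s⁻¹).toBlock (· ∉ S) (· ∉ S)) := by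
    have hdiag : IsUnit (diagonal fun i : {v // v ∉ S} => s⁻¹ i) :=
      isUnit_diagonal.2 (Pi.isUnit_iff.2 fun i => (hs_inv i).isUnit)
    rw [toBlock_diagonal_mul_mul_diagonal]
    exact (hdiag.mul (hconn.isUnit_toBlock_compl hL hS.nonempty)).mul hdiag
  have main := rayleighMin_le_rayleighMin_schur psd kernel hoff hS
  rw [schur_diagonal_mul_mul_diagonal (fun v _ => hs_inv v) (fun v _ => hs_inv v)] at main
  rwa [fun_div_mul_eq_diagonal_mul_mul_diagonal L s,
    fun_div_mul_eq_diagonal_mul_mul_diagonal (schur L S) (fun i => s i)]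

end Connected

section Laplacian

variable {V : Type*} [Fintype V] [DecidableEq V] {c : V → V → ℝ}

lemma lapl_mulVec_apply (c : V → V → ℝ) (x : V → ℝ) (v : V) :
    (lapl c *ᵥ x) v = ∑ w, c v w * (x v - x w) + c v v * x v := by
  have entry (w : V) : lapl c v w = (if v = w then wdeg c v + c v v else 0) - c v w := by
    by_cases h : v = w
    · subst h; simp [lapl, wdeg]
    · simp [lapl, h]
  simp only [mulVec, dotProduct, entry, sub_mul, ite_mul, zero_mul, Finset.sum_sub_distrib,
    Finset.sum_ite_eq, Finset.mem_univ, if_true, mul_sub, wdeg, add_mul, Finset.sum_mul]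
  ring

lemma lapl_mulVec_one (hdiag : ∀ v, c v v = 0) : lapl c *ᵥ 1 = 0 := by
  funext v
  simp [lapl_mulVec_apply, hdiag]

lemma two_mul_dotProduct_lapl_mulVec (hsymm : ∀ u v, c u v = c v u) (x : V → ℝ) :
    2 * (x ⬝ᵥ lapl c *ᵥ x) =
      ∑ v, ∑ w, c v w * (x v - x w) ^ 2 + 2 * ∑ v, c v v * x v ^ 2 := by
  have energy : x ⬝ᵥ lapl c *ᵥ x =
      ∑ v, ∑ w, x v * (c v w * (x v - x w)) + ∑ v, c v v * x v ^ 2 := by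
    simp only [dotProduct, lapl_mulVec_apply, mul_add, Finset.mul_sum, Finset.sum_add_distrib]
    congr! 2
    ring
  have swap : ∑ v, ∑ w, x v * (c v w * (x v - x w)) = ∑ v, ∑ w, x w * (c v w * (x w - x v)) := by
    rw [Finset.sum_comm]
    simp only [hsymm]
  have pair : ∑ v, ∑ w, c v w * (x v - x w) ^ 2 =
      ∑ v, ∑ w, x v * (c v w * (x v - x w)) + ∑ v, ∑ w, x w * (c v w * (x w - x v)) := by
    simp only [← Finset.sum_add_distrib]
    congr! 2
    ring
  rw [energy, pair, ← swap]
  ring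

lemma lapl_posSemidef (hsymm : ∀ u v, c u v = c v u) (hnonneg : ∀ u v, 0 ≤ c u v) :
    (lapl c).PosSemidef := by
  refine .of_dotProduct_mulVec_nonneg ?_ fun x => ?_
  · ext u v
    by_cases h : u = v
    · subst h; rfl
    · simp [lapl, h, Ne.symm h, hsymm u v]
  · have h := two_mul_dotProduct_lapl_mulVec hsymm x
    have hedges : 0 ≤ ∑ v, ∑ w, c v w * (x v - x w) ^ 2 :=
      Finset.sum_nonneg fun v _ => Finset.sum_nonneg fun w _ =>
        mul_nonneg (hnonneg v w) (sq_nonneg _)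
    have hloops : 0 ≤ ∑ v, c v v * x v ^ 2 :=
      Finset.sum_nonneg fun v _ => mul_nonneg (hnonneg v v) (sq_nonneg _)
    rw [star_trivial]
    linarith

lemma wdeg_pos [Nontrivial V] (hsymm : ∀ u v, c u v = c v u) (hnonneg : ∀ u v, 0 ≤ c u v)
    (hconn : LapConnected (lapl c)) (v : V) : 0 < wdeg c v :=
  (hconn.diag_pos (lapl_posSemidef hsymm hnonneg) v).trans_eq (if_pos rfl)

end Laplacian

lemma nontrivial_union_of_disjoint {α : Type*} {A B : Set α} (hd : Disjoint A B)
    (hA : A.Nonempty) (hB : B.Nonempty) : (A ∪ B).Nontrivial := by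
  obtain ⟨a, ha⟩ := hA
  obtain ⟨b, hb⟩ := hB
  exact ⟨a, .inl ha, b, .inr hb, hd.ne_of_mem ha hb⟩

/-- The smallest nonzero eigenvalue of `P^{-1/2} L_I P^{-1/2}` (where `I` is the Schur
complement of `G` onto `A ∪ B` and `P` is the diagonal of `G`-degrees, and the kernel
of `L_I` is spanned by the all-ones vector so that the eigenvalue has a Rayleigh
quotient characterization over vectors orthogonal to `P^{1/2} 1`) is at least `λ_G`. -/
theorem schur_normalized_eigenvalue_ge {V : Type*} [Fintype V] [DecidableEq V]
    (c : V → V → ℝ) (hsymm : ∀ u v, c u v = c v u) (hnonneg : ∀ u v, 0 ≤ c u v)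
    (hdiag : ∀ v, c v v = 0) (hconn : LapConnected (lapl c))
    (A B : Set V) (hd : Disjoint A B) (hA : A.Nonempty) (hB : B.Nonempty) :
    lambdaG c ≤
      rayleighMin
        (fun i j : ↥(A ∪ B) =>
          schur (lapl c) (A ∪ B) i j / (Real.sqrt (wdeg c i.1) * Real.sqrt (wdeg c j.1)))
        (fun i : ↥(A ∪ B) => Real.sqrt (wdeg c i.1)) := by
  have hS := nontrivial_union_of_disjoint hd hA hB
  have := Set.nontrivial_of_nontrivial hS
  exact schur_normalized_eigenvalue_ge_general (lapl_posSemidef hsymm hnonneg)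
    (lapl_mulVec_one hdiag) hconn (wdeg_pos hsymm hnonneg hconn) hS
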